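/- Let (R_0, R_1, ..., R_ℓ, R_{ℓ+1}=0) be the subresultant PRS of A and B (not necessarily normal), and let t be the essential part of I at order d_A + d_B (which is defined, since x^{d_B}·A ∈ I has degree d_A + d_B). Then for every i with 2 ≤ i ≤ ℓ, the power t^{d_A + d_B - 2·d_{i-1} + 1} divides the content cont(R_i). -/

import Mathlib

open Polynomial

/-- `IsEssentialPart I n t` says that `t` is the essential part of the ideal `I` of
`D[x]` at order `n`: either `t` is the leading coefficient of some nonzero degree-`n`
element of `I` whose leading coefficient has minimal Euclidean norm (minimal with
respect to the Euclidean "smaller" relation) among all nonzero degree-`n` elements of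
`I`, or `I` has no nonzero element of degree `n` and `t = 1`. -/
def IsEssentialPart {D : Type*} [EuclideanDomain D]
    (I : Ideal (Polynomial D)) (n : ℕ) (t : D) : Prop :=
  (∃ T ∈ I, T ≠ 0 ∧ T.natDegree = n ∧ T.leadingCoeff = t ∧
      ∀ L ∈ I, L ≠ 0 → L.natDegree = n → ¬ EuclideanDomain.r L.leadingCoeff t) ∨
  ((¬ ∃ T ∈ I, T ≠ 0 ∧ T.natDegree = n) ∧ t = 1)

/-!
For `2 ≤ i ≤ ℓ` the term `R i` of the subresultant PRS is, up to sign, the `j`-th subresultant of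
`A` and `B` with `j = deg R (i - 1) - 1`. Its `e`-th coefficient is therefore, up to sign, the minor
of the Sylvester matrix with rows `A, xA, …` and `B, xB, …` and columns `e, j + 1, j + 2, …`. Since
signs do not affect divisibility, this is proved for the squares, which frees the recursion for the
minors from all sign bookkeeping.

The rows lie in `I`, and over a principal ideal domain they can be expanded in elements `T n ∈ I` of
degree at most `n` whose coefficients at `n` generate the ideals `I.leadingCoeffNth n`. The minor
thus factors as a determinant times the product of the top coefficients of the
`T (j + 1), …, T (j + m)` with `m = d_A + d_B - 2 * j - 1`, and `t` divides each of the `m` factors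
because the leading coefficient ideals increase with the order.
-/

section Minors

variable {F : Type*} [CommRing F]

/-- The column indices `e, j + 1, j + 2, …` of the minors defining the `e`-th coefficient of the
`j`-th subresultant. -/
def subresultantColumn (j e k : ℕ) : ℕ := if k = 0 then e else j + k

lemma subresultantColumn_of_ne_zero (j e : ℕ) {k : ℕ} (hk : k ≠ 0) :
    subresultantColumn j e k = j + k := if_neg hk

/-- The minor of the coefficient matrix of the polynomials `v` in the columns
`subresultantColumn j e`. -/
def coeffMinor {m : ℕ} (j e : ℕ) (v : Fin m → F[X]) : F :=
  (Matrix.of fun i k : Fin m => (v i).coeff (subresultantColumn j e k)).det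

/-- The polynomials `P, …, x ^ (a - 1) * P` and `Q, …, x ^ (b - 1) * Q` whose coefficients form the
rows of the Sylvester matrix of `P` and `Q`. -/
noncomputable def sylvesterRows (a b : ℕ) (P Q : F[X]) : Fin (a + b) → F[X] :=
  Fin.append (fun i => X ^ (i : ℕ) * P) fun i => X ^ (i : ℕ) * Q

/-- The minor of the first `a` shifts of `P` and the first `b` shifts of `Q` in the columns
`subresultantColumn j e`. -/
noncomputable def sylvesterMinor (j e a b : ℕ) (P Q : F[X]) : F :=
  coeffMinor j e (sylvesterRows a b P Q)

/-- The `e`-th coefficient, up to sign, of the `j`-th subresultant of `P` and `Q`; it is meaningful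
for `j < deg Q ≤ deg P`. -/
noncomputable def subresultantCoeff (j e : ℕ) (P Q : F[X]) : F :=
  sylvesterMinor j e (Q.natDegree - j) (P.natDegree - j) P Q

@[simp]
lemma sylvesterRows_castAdd {a : ℕ} (b : ℕ) (P Q : F[X]) (i : Fin a) :
    sylvesterRows a b P Q (Fin.castAdd b i) = X ^ (i : ℕ) * P := by
  simp [sylvesterRows]

@[simp]
lemma sylvesterRows_natAdd (a : ℕ) {b : ℕ} (P Q : F[X]) (i : Fin b) :
    sylvesterRows a b P Q (Fin.natAdd a i) = X ^ (i : ℕ) * Q := by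
  simp [sylvesterRows]

lemma sylvesterRows_succ_castSucc (a b : ℕ) (P Q : F[X]) (i : Fin (a + b)) :
    sylvesterRows a (b + 1) P Q (i.castSucc : Fin (a + b + 1)) = sylvesterRows a b P Q i := by
  refine Fin.addCases (fun i => ?_) (fun i => ?_) i
  · rw [sylvesterRows_castAdd]
    exact sylvesterRows_castAdd (b + 1) P Q i
  · rw [sylvesterRows_natAdd]
    exact sylvesterRows_natAdd a P Q i.castSucc

lemma sylvesterRows_succ_last (a b : ℕ) (P Q : F[X]) :
    sylvesterRows a (b + 1) P Q (Fin.last (a + b)) = X ^ b * Q :=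
  sylvesterRows_natAdd a P Q (Fin.last b)

lemma natDegree_X_pow_mul_le_add (n : ℕ) (P : F[X]) : (X ^ n * P).natDegree ≤ n + P.natDegree :=
  natDegree_mul_le_of_le (natDegree_X_pow_le n) le_rfl

lemma natDegree_sylvesterRows_lt {j a b : ℕ} {P Q : F[X]} (hP : P.natDegree ≤ j + b)
    (hQ : Q.natDegree ≤ j + a) (i : Fin (a + b)) :
    (sylvesterRows a b P Q i).natDegree < j + (a + b) := by
  refine Fin.addCases (fun i => ?_) (fun i => ?_) i
  · rw [sylvesterRows_castAdd]
    exact (natDegree_X_pow_mul_le_add i P).trans_lt (by omega)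
  · rw [sylvesterRows_natAdd]
    exact (natDegree_X_pow_mul_le_add i Q).trans_lt (by omega)

lemma sylvesterRows_mem {I : Ideal F[X]} {P Q : F[X]} (hP : P ∈ I) (hQ : Q ∈ I) {a b : ℕ}
    (i : Fin (a + b)) : sylvesterRows a b P Q i ∈ I := by
  refine Fin.addCases (fun i => ?_) (fun i => ?_) i
  · simpa using I.mul_mem_left _ hP
  · simpa using I.mul_mem_left _ hQ

lemma coeffMinor_sum_C_mul {m : ℕ} (j e : ℕ) (U : Matrix (Fin m) (Fin m) F) (v : Fin m → F[X]) :
    coeffMinor j e (fun i => ∑ k, C (U i k) * v k) = U.det * coeffMinor j e v := by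
  rw [coeffMinor, coeffMinor, ← Matrix.det_mul]
  congr 1
  ext i k
  simp only [Matrix.of_apply, Matrix.mul_apply, finsetSum_coeff, coeff_C_mul]

lemma coeffMinor_succ {m : ℕ} (hm : m ≠ 0) (j e : ℕ) (v : Fin (m + 1) → F[X])
    (hv : ∀ i : Fin m, (v i.castSucc).coeff (j + m) = 0) :
    coeffMinor j e v =
      (v (Fin.last m)).coeff (j + m) * coeffMinor j e fun i : Fin m => v i.castSucc := by
  have hcol := subresultantColumn_of_ne_zero j e hm
  rw [coeffMinor, Matrix.det_succ_column _ (Fin.last m), Fin.sum_univ_castSucc,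
    Finset.sum_eq_zero, zero_add]
  · have hsign : (-1 : F) ^ (m + m) = 1 := Even.neg_one_pow ⟨m, rfl⟩
    simp only [Matrix.of_apply, Fin.val_last, hcol, hsign, one_mul, Fin.succAbove_last]
    rfl
  · intro i _
    simp only [Matrix.of_apply, Fin.val_last, hcol, hv, mul_zero, zero_mul]

lemma coeffMinor_comp_equiv_sq {m n : ℕ} (j e : ℕ) (v : Fin m → F[X]) (σ : Fin n ≃ Fin m) :
    coeffMinor j e (v ∘ σ) ^ 2 = coeffMinor j e v ^ 2 := by
  obtain rfl : n = m := by simpa using Fintype.card_congr σ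
  have hperm : coeffMinor j e (v ∘ σ) = (Equiv.Perm.sign σ : F) * coeffMinor j e v := by
    rw [coeffMinor, coeffMinor, ← Matrix.det_permute]
    rfl
  rw [hperm, mul_pow]
  rcases Int.units_eq_one_or (Equiv.Perm.sign σ) with hσ | hσ <;> simp [hσ]

lemma coeffMinor_map {G : Type*} [CommRing G] (φ : F →+* G) {m : ℕ} (j e : ℕ) (v : Fin m → F[X]) :
    coeffMinor j e (fun i => (v i).map φ) = φ (coeffMinor j e v) := by
  simp only [coeffMinor, RingHom.map_det]
  congr 1
  ext i k
  simp

lemma sylvesterMinor_comm_sq (j e a b : ℕ) (P Q : F[X]) :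
    sylvesterMinor j e a b P Q ^ 2 = sylvesterMinor j e b a Q P ^ 2 := by
  rw [sylvesterMinor, sylvesterMinor, ← coeffMinor_comp_equiv_sq j e _ (finAddFlip (m := b))]
  congr 2
  funext i
  refine Fin.addCases (fun i => ?_) (fun i => ?_) i <;> simp

lemma sylvesterMinor_map {G : Type*} [CommRing G] (φ : F →+* G) (j e a b : ℕ) (P Q : F[X]) :
    sylvesterMinor j e a b (P.map φ) (Q.map φ) = φ (sylvesterMinor j e a b P Q) := by
  rw [sylvesterMinor, sylvesterMinor, ← coeffMinor_map]
  congr 1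
  funext i
  refine Fin.addCases (fun i => ?_) (fun i => ?_) i <;> simp

lemma subresultantCoeff_map {G : Type*} [CommRing G] {φ : F →+* G} (hφ : Function.Injective φ)
    (j e : ℕ) (P Q : F[X]) :
    subresultantCoeff j e (P.map φ) (Q.map φ) = φ (subresultantCoeff j e P Q) := by
  simp only [subresultantCoeff, natDegree_map_eq_of_injective hφ, sylvesterMinor_map]

lemma sylvesterMinor_one_zero (j e : ℕ) (P Q : F[X]) :
    sylvesterMinor j e 1 0 P Q = P.coeff e := by
  simpa [sylvesterMinor, coeffMinor, subresultantColumn] using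
    congrArg (coeff · e) (sylvesterRows_castAdd 0 P Q (0 : Fin 1))

lemma X_pow_mul_mul_eq_sum {u : F[X]} {i b : ℕ} (h : i + u.natDegree < b) (Q : F[X]) :
    X ^ i * (u * Q) = ∑ k : Fin b, C ((X ^ i * u).coeff k) * (X ^ (k : ℕ) * Q) := by
  have hdeg : (X ^ i * u).natDegree < b := (natDegree_X_pow_mul_le_add i u).trans_lt h
  conv_lhs =>
    rw [← mul_assoc, as_sum_range_C_mul_X_pow' _ hdeg, Finset.sum_mul, Finset.sum_range]
  simp only [mul_assoc]

lemma sylvesterMinor_C_mul_add_mul (j e : ℕ) {a b : ℕ} (l : F) (P Q : F[X]) {u : F[X]}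
    (hu : u.natDegree + a ≤ b) :
    sylvesterMinor j e a b (C l * P + u * Q) Q = l ^ a * sylvesterMinor j e a b P Q := by
  let W : Matrix (Fin a) (Fin b) F := Matrix.of fun i k => (X ^ (i : ℕ) * u).coeff k
  let U : Matrix (Fin (a + b)) (Fin (a + b)) F :=
    (Matrix.fromBlocks (l • 1) W 0 1).reindex finSumFinEquiv finSumFinEquiv
  have hU : U.det = l ^ a := by simp [U]
  rw [← hU, sylvesterMinor, sylvesterMinor, ← coeffMinor_sum_C_mul]
  congr 1
  funext i
  refine Fin.addCases (fun i => ?_) (fun i => ?_) i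
  · rw [Fin.sum_univ_add]
    simp [U, W, mul_add, X_pow_mul_mul_eq_sum (show (i : ℕ) + u.natDegree < b by omega),
      Matrix.one_apply, mul_left_comm, apply_ite C, ite_mul, mul_ite]
  · rw [Fin.sum_univ_add]
    simp [U, Matrix.one_apply]

lemma pow_mul_sylvesterMinor_eq {j e a b : ℕ} {l m : F} {P Q R u : F[X]}
    (h : l • P = u * Q + m • R) (hu : u.natDegree + a ≤ b) :
    l ^ a * sylvesterMinor j e a b P Q = m ^ a * sylvesterMinor j e a b R Q := by
  have hab : (0 : F[X]).natDegree + a ≤ b := by rw [natDegree_zero]; omega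
  rw [smul_eq_C_mul, smul_eq_C_mul] at h
  rw [← sylvesterMinor_C_mul_add_mul j e l P Q hab, ← sylvesterMinor_C_mul_add_mul j e m R Q hu,
    h, zero_mul, add_zero, add_comm]

lemma sylvesterMinor_add_right {j a b : ℕ} (e n : ℕ) {P Q : F[X]} (ha : a ≠ 0)
    (hP : P.natDegree ≤ j + b) (hQ : Q.natDegree = j + a) :
    sylvesterMinor j e a (b + n) P Q = Q.leadingCoeff ^ n * sylvesterMinor j e a b P Q := by
  induction n with
  | zero => simp
  | succ n ih =>
    have hlast : (X ^ (b + n) * Q).coeff (j + (a + (b + n))) = Q.leadingCoeff := by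
      rw [show j + (a + (b + n)) = Q.natDegree + (b + n) by omega, coeff_X_pow_mul,
        coeff_natDegree]
    have hrow (i : Fin (a + (b + n))) :
        (sylvesterRows a (b + n) P Q i).coeff (j + (a + (b + n))) = 0 :=
      coeff_eq_zero_of_natDegree_lt (natDegree_sylvesterRows_lt (by omega) hQ.le i)
    have hpeel := coeffMinor_succ (m := a + (b + n)) (by omega) j e
      (sylvesterRows a (b + n + 1) P Q)
    simp only [sylvesterRows_succ_castSucc, sylvesterRows_succ_last] at hpeel
    calc sylvesterMinor j e a (b + (n + 1)) P Q
        = Q.leadingCoeff * sylvesterMinor j e a (b + n) P Q := by rw [← hlast]; exact hpeel hrow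
      _ = Q.leadingCoeff ^ (n + 1) * sylvesterMinor j e a b P Q := by rw [ih]; ring

end Minors

section LeadingCoeffNth

variable {D : Type*} [CommRing D] {I : Ideal D[X]}

lemma mem_leadingCoeffNth_iff_exists_coeff_eq {n : ℕ} {x : D} :
    x ∈ I.leadingCoeffNth n ↔ ∃ p ∈ I, p.natDegree ≤ n ∧ p.coeff n = x := by
  simp only [Ideal.leadingCoeffNth, Ideal.degreeLE, Submodule.mem_map, lcoeff_apply,
    Submodule.mem_inf, mem_degreeLE, natDegree_le_iff_degree_le]
  exact ⟨fun ⟨p, ⟨hdeg, hp⟩, hx⟩ => ⟨p, hp, hdeg, hx⟩, fun ⟨p, hp, hdeg, hx⟩ => ⟨p, ⟨hdeg, hp⟩, hx⟩⟩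

lemma exists_mem_leadingCoeffNth_eq_span [IsPrincipalIdealRing D] (I : Ideal D[X]) (n : ℕ) :
    ∃ T ∈ I, T.natDegree ≤ n ∧ I.leadingCoeffNth n = Ideal.span {T.coeff n} := by
  obtain ⟨g, hg⟩ := (IsPrincipalIdealRing.principal (I.leadingCoeffNth n)).principal
  obtain ⟨T, hT, hTn, rfl⟩ := mem_leadingCoeffNth_iff_exists_coeff_eq.1
    (hg ▸ Submodule.mem_span_singleton_self g)
  exact ⟨T, hT, hTn, hg⟩

lemma exists_natDegree_sub_sum_le {T : ℕ → D[X]} (hT : ∀ n, T n ∈ I)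
    (hTn : ∀ n, (T n).natDegree ≤ n)
    (hspan : ∀ n, I.leadingCoeffNth n = Ideal.span {(T n).coeff n}) (j n : ℕ) {P : D[X]}
    (hP : P ∈ I) (hPn : P.natDegree ≤ j + n) :
    ∃ c : Fin n → D, (P - ∑ k, C (c k) * T (j + k + 1)).natDegree ≤ j := by
  induction n generalizing P with
  | zero => exact ⟨0, by simpa using hPn⟩
  | succ n ih =>
    obtain ⟨q, hq⟩ : (T (j + n + 1)).coeff (j + n + 1) ∣ P.coeff (j + n + 1) := by
      rw [← Ideal.mem_span_singleton, ← hspan]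
      exact mem_leadingCoeffNth_iff_exists_coeff_eq.2 ⟨P, hP, hPn, rfl⟩
    have hdeg : (P - C q * T (j + n + 1)).natDegree ≤ j + n := by
      refine natDegree_le_pred (n := j + n + 1) ?_ ?_
      · exact (natDegree_sub_le _ _).trans
          (max_le hPn ((natDegree_C_mul_le _ _).trans (hTn _)))
      · rw [coeff_sub, coeff_C_mul, hq, mul_comm, sub_self]
    obtain ⟨c, hc⟩ := ih (I.sub_mem hP (I.mul_mem_left _ (hT _))) hdeg
    refine ⟨Fin.snoc c q, ?_⟩
    simpa [Fin.sum_univ_castSucc, sub_sub, add_comm] using hc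

lemma coeffMinor_eq_det_mul_prod {m : ℕ} (j e : ℕ) {T : ℕ → D[X]}
    (hTn : ∀ n, (T n).natDegree ≤ n) {v : Fin (m + 1) → D[X]} {c : Fin (m + 1) → Fin m → D}
    (hc : ∀ i, (v i - ∑ k, C (c i k) * T (j + k + 1)).natDegree ≤ j) :
    coeffMinor j e v =
      (Matrix.of fun i => Fin.cons ((v i - ∑ k, C (c i k) * T (j + k + 1)).coeff e) (c i)).det *
        ∏ k : Fin m, (T (j + k + 1)).coeff (j + k + 1) := by
  let U : Matrix (Fin (m + 1)) (Fin (m + 1)) D := Matrix.of <|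
    Fin.cons (Pi.single 0 1) fun i k => (T (j + i + 1)).coeff (subresultantColumn j e k)
  have hU : U.det = ∏ k : Fin m, (T (j + k + 1)).coeff (j + k + 1) := by
    rw [Matrix.det_of_isLowerTriangular]
    · simp [U, Fin.prod_univ_succ, subresultantColumn, add_assoc]
    · intro i k hik
      have hk : (k : ℕ) ≠ 0 := (Nat.zero_le _).trans_lt (show (i : ℕ) < k from hik) |>.ne'
      cases i using Fin.cases with
      | zero => simp [U, Fin.ext_iff, hk]
      | succ i =>
        have hik : (i : ℕ) + 1 < k := hik
        change (T (j + i + 1)).coeff (subresultantColumn j e k) = 0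
        rw [subresultantColumn_of_ne_zero j e hk]
        exact coeff_eq_zero_of_natDegree_lt ((hTn _).trans_lt (by omega))
  rw [← hU, ← Matrix.det_mul, coeffMinor]
  congr 1
  ext i k
  set r := v i - ∑ k, C (c i k) * T (j + k + 1)
  have hv : v i = r + ∑ k, C (c i k) * T (j + k + 1) := (sub_add_cancel _ _).symm
  have hrk : r.coeff (subresultantColumn j e k) = r.coeff e * (Pi.single 0 1 : _ → D) k := by
    rcases eq_or_ne k 0 with rfl | hk
    · simp [subresultantColumn]
    · have hk' : (k : ℕ) ≠ 0 := Fin.val_ne_zero_iff.2 hk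
      rw [Pi.single_eq_of_ne hk, mul_zero, subresultantColumn_of_ne_zero j e hk']
      exact coeff_eq_zero_of_natDegree_lt ((hc i).trans_lt (by omega))
  rw [Matrix.mul_apply, Fin.sum_univ_succ]
  simp [U, hv, hrk, finsetSum_coeff]

lemma pow_dvd_coeffMinor [IsPrincipalIdealRing D] {t : D} {j m : ℕ}
    (ht : I.leadingCoeffNth (j + m) ≤ Ideal.span {t}) (e : ℕ) {v : Fin (m + 1) → D[X]}
    (hv : ∀ i, v i ∈ I) (hvn : ∀ i, (v i).natDegree ≤ j + m) :
    t ^ m ∣ coeffMinor j e v := by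
  choose T hT hTn hspan using exists_mem_leadingCoeffNth_eq_span I
  choose c hc using fun i => exists_natDegree_sub_sum_le hT hTn hspan j m (hv i) (hvn i)
  have htT (k : Fin m) : t ∣ (T (j + k + 1)).coeff (j + k + 1) := by
    rw [← Ideal.mem_span_singleton]
    refine ht (I.leadingCoeffNth_mono (show j + k + 1 ≤ j + m by omega) ?_)
    exact mem_leadingCoeffNth_iff_exists_coeff_eq.2 ⟨_, hT _, hTn _, rfl⟩
  rw [coeffMinor_eq_det_mul_prod j e hTn hc]
  refine Dvd.dvd.mul_left ?_ _
  simpa using Finset.prod_dvd_prod_of_dvd (s := Finset.univ) (fun _ => t) _ fun k _ => htT k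

lemma pow_dvd_subresultantCoeff [IsPrincipalIdealRing D] {A B : D[X]} {t : D}
    (ht : (Ideal.span {A, B}).leadingCoeffNth (A.natDegree + B.natDegree) ≤ Ideal.span {t})
    {j : ℕ} (hjA : j < A.natDegree) (hjB : j < B.natDegree) (e : ℕ) :
    t ^ (A.natDegree + B.natDegree - 2 * (j + 1) + 1) ∣ subresultantCoeff j e A B := by
  have hA : A ∈ Ideal.span {A, B} := Ideal.subset_span (by simp)
  have hB : B ∈ Ideal.span {A, B} := Ideal.subset_span (by simp)
  obtain ⟨a, ha⟩ := Nat.exists_eq_add_of_lt hjB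
  obtain ⟨b, hb⟩ := Nat.exists_eq_add_of_lt hjA
  rw [subresultantCoeff, show B.natDegree - j = a + 1 by omega,
    show A.natDegree - j = b + 1 by omega,
    show A.natDegree + B.natDegree - 2 * (j + 1) + 1 = a + 1 + b by omega]
  refine pow_dvd_coeffMinor (((Ideal.span {A, B}).leadingCoeffNth_mono ?_).trans ht) e
    (sylvesterRows_mem (a := a + 1) (b := b + 1) hA hB) fun i => ?_
  · omega
  · have := natDegree_sylvesterRows_lt (j := j) (a := a + 1) (b := b + 1) hb.le ha.le i
    omega

end LeadingCoeffNth

lemma IsEssentialPart.leadingCoeffNth_le_span {D : Type*} [EuclideanDomain D] {I : Ideal D[X]}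
    {n : ℕ} {t : D} (ht : IsEssentialPart I n t) : I.leadingCoeffNth n ≤ Ideal.span {t} := by
  intro x hx
  obtain ⟨L, hL, hLn, rfl⟩ := mem_leadingCoeffNth_iff_exists_coeff_eq.1 hx
  rw [Ideal.mem_span_singleton]
  rcases ht with ⟨T, hT, hT0, rfl, rfl, hmin⟩ | ⟨-, rfl⟩
  swap
  · exact one_dvd _
  by_contra hndvd
  have hmod : L.coeff T.natDegree % T.leadingCoeff ≠ 0 :=
    fun h => hndvd (EuclideanDomain.mod_eq_zero.1 h)
  let W := L - C (L.coeff T.natDegree / T.leadingCoeff) * T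
  have hWcoeff : W.coeff T.natDegree = L.coeff T.natDegree % T.leadingCoeff := by
    rw [EuclideanDomain.mod_eq_sub_mul_div, coeff_sub, coeff_C_mul, coeff_natDegree, mul_comm]
  have hWdeg : W.natDegree = T.natDegree :=
    le_antisymm ((natDegree_sub_le _ _).trans (max_le hLn (natDegree_C_mul_le _ _)))
      (le_natDegree_of_ne_zero (hWcoeff ▸ hmod))
  have hW0 : W ≠ 0 := fun h => hmod (by rw [← hWcoeff, h, coeff_zero])
  refine hmin W (I.sub_mem hL (I.mul_mem_left _ hT)) hW0 hWdeg ?_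
  rw [leadingCoeff, hWdeg, hWcoeff]
  exact EuclideanDomain.mod_lt _ (leadingCoeff_ne_zero.2 hT0)

section PRS

variable {K : Type*} [Field K] {ℓ : ℕ} {R Q : ℕ → K[X]} {β ψ : ℕ → K}

/-- The difference `deg R i - deg R (i + 1)`; the subtraction is truncated. -/
noncomputable def degreeDrop {F : Type*} [Semiring F] (R : ℕ → F[X]) (i : ℕ) : ℕ :=
  (R i).natDegree - (R (i + 1)).natDegree

/-- The terms `R 0, …, R ℓ`, together with `R (ℓ + 1)`, which may be zero, form an initial segment
of the subresultant PRS of `R 0` and `R 1`, with quotients `Q`, multipliers `β` and auxiliary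
sequence `ψ`. The multipliers `α` of the paper are replaced by their values. -/
structure IsSubresultantPRS (ℓ : ℕ) (R Q : ℕ → K[X]) (β ψ : ℕ → K) : Prop where
  ne_zero : ∀ i ≤ ℓ, R i ≠ 0
  natDegree_one_le : (R 1).natDegree ≤ (R 0).natDegree
  degree_lt : ∀ i < ℓ, (R (i + 2)).degree < (R (i + 1)).degree
  pseudo_division : ∀ i < ℓ, (R (i + 1)).leadingCoeff ^ (degreeDrop R i + 1) • R i =
    Q (i + 1) * R (i + 1) + β (i + 1) • R (i + 2)
  psi_one : ψ 1 = -1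
  psi_succ : ∀ i, i + 2 ≤ ℓ → ψ (i + 2) =
    (-(R (i + 1)).leadingCoeff) ^ degreeDrop R i / ψ (i + 1) ^ (degreeDrop R i - 1)
  beta_one : β 1 = (-1) ^ (degreeDrop R 0 + 1)
  beta_succ : ∀ i, i + 2 ≤ ℓ →
    β (i + 2) = -(R (i + 1)).leadingCoeff * ψ (i + 2) ^ degreeDrop R (i + 1)

-- The algebra of the induction below: `c` and `g` stand for the squared leading coefficients of
-- `R (i + 1)` and `R i`, and `p` for the square of `ψ (i + 1)`, so that `hψ` is its recursion.
lemma pow_mul_pow_mul_eq_of_mul_pow_eq {c g p p' S S' : K} {δ δ' y z : ℕ} (hc : c ≠ 0)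
    (hg : g ≠ 0) (hp : p ≠ 0) (hz : z = δ' + y) (hψ : p' * p ^ δ = c ^ δ * p)
    (hstep : (c ^ (δ + 1)) ^ (z + 1) * (g ^ (z + 1) * p ^ (δ + z) * S) =
      (g * p ^ δ) ^ (z + 1) * c ^ (δ + δ') * S') :
    c ^ (y + 1) * p' ^ z * S = S' := by
  have hne : (g * p ^ δ) ^ (z + 1) * c ^ (δ + δ') ≠ 0 :=
    mul_ne_zero (pow_ne_zero _ (mul_ne_zero hg (pow_ne_zero _ hp))) (pow_ne_zero _ hc)
  refine mul_left_cancel₀ hne ?_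
  calc (g * p ^ δ) ^ (z + 1) * c ^ (δ + δ') * (c ^ (y + 1) * p' ^ z * S)
      = g ^ (z + 1) * p ^ δ * c ^ δ * c ^ (δ' + y + 1) * (p' * p ^ δ) ^ z * S := by ring
    _ = (c ^ (δ + 1)) ^ (z + 1) * (g ^ (z + 1) * p ^ (δ + z) * S) := by rw [← hz, hψ]; ring
    _ = (g * p ^ δ) ^ (z + 1) * c ^ (δ + δ') * S' := hstep

namespace IsSubresultantPRS

lemma leadingCoeff_ne_zero (h : IsSubresultantPRS ℓ R Q β ψ) {i : ℕ} (hi : i ≤ ℓ) :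
    (R i).leadingCoeff ≠ 0 :=
  Polynomial.leadingCoeff_ne_zero.2 (h.ne_zero i hi)

lemma natDegree_lt (h : IsSubresultantPRS ℓ R Q β ψ) {i : ℕ} (hi : i + 2 ≤ ℓ) :
    (R (i + 2)).natDegree < (R (i + 1)).natDegree :=
  natDegree_lt_natDegree (h.ne_zero _ hi) (h.degree_lt i (by omega))

lemma natDegree_succ_le (h : IsSubresultantPRS ℓ R Q β ψ) {i : ℕ} (hi : i < ℓ) :
    (R (i + 1)).natDegree ≤ (R i).natDegree := by
  cases i with
  | zero => exact h.natDegree_one_le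
  | succ i => exact (h.natDegree_lt hi).le

lemma natDegree_eq_add_degreeDrop (h : IsSubresultantPRS ℓ R Q β ψ) {i : ℕ} (hi : i < ℓ) :
    (R i).natDegree = (R (i + 1)).natDegree + degreeDrop R i :=
  (Nat.add_sub_of_le (h.natDegree_succ_le hi)).symm

lemma natDegree_le_one (h : IsSubresultantPRS ℓ R Q β ψ) {i : ℕ} (hi : i < ℓ) :
    (R (i + 1)).natDegree ≤ (R 1).natDegree := by
  induction i with
  | zero => exact le_rfl
  | succ i ih => exact (h.natDegree_lt hi).le.trans (ih (by omega))

lemma psi_ne_zero (h : IsSubresultantPRS ℓ R Q β ψ) {i : ℕ} (hi : i < ℓ) : ψ (i + 1) ≠ 0 := by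
  induction i with
  | zero => simp [h.psi_one]
  | succ i ih =>
    rw [h.psi_succ i hi]
    exact div_ne_zero (pow_ne_zero _ (neg_ne_zero.2 (h.leadingCoeff_ne_zero hi.le)))
      (pow_ne_zero _ (ih (by omega)))

-- For `i > 0` this is the recursion for `ψ`; `degreeDrop R 0` may vanish, but then `ψ 1 ^ 2 = 1`.
lemma psi_succ_sq_mul (h : IsSubresultantPRS ℓ R Q β ψ) {i : ℕ} (hi : i + 2 ≤ ℓ) :
    ψ (i + 2) ^ 2 * (ψ (i + 1) ^ 2) ^ degreeDrop R i =
      ((R (i + 1)).leadingCoeff ^ 2) ^ degreeDrop R i * ψ (i + 1) ^ 2 := by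
  have hψ := h.psi_ne_zero (show i < ℓ by omega)
  rw [h.psi_succ i hi]
  rcases hδ : degreeDrop R i with _ | δ
  · cases i with
    | zero => simp [h.psi_one]
    | succ i =>
      have hlt := h.natDegree_lt (show i + 2 ≤ ℓ by omega)
      exact absurd (Nat.sub_eq_zero_iff_le.1 hδ) hlt.not_ge
  · rw [Nat.add_sub_cancel, div_pow, pow_right_comm, neg_sq]
    field_simp
    ring

/-- The factor of `β (i + 1) ^ 2` contributed by the leading coefficient of `R i`; the formula for
`β 1` involves no leading coefficient. -/
noncomputable def leadSq (R : ℕ → K[X]) (i : ℕ) : K := if i = 0 then 1 else (R i).leadingCoeff ^ 2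

lemma leadSq_ne_zero (h : IsSubresultantPRS ℓ R Q β ψ) {i : ℕ} (hi : i ≤ ℓ) : leadSq R i ≠ 0 := by
  rw [leadSq]
  split_ifs
  exacts [one_ne_zero, pow_ne_zero _ (h.leadingCoeff_ne_zero hi)]

lemma beta_sq (h : IsSubresultantPRS ℓ R Q β ψ) {i : ℕ} (hi : i < ℓ) :
    β (i + 1) ^ 2 = leadSq R i * (ψ (i + 1) ^ 2) ^ degreeDrop R i := by
  cases i with
  | zero =>
    rw [h.beta_one, h.psi_one, leadSq, if_pos rfl, pow_right_comm,
      neg_one_sq, one_pow, one_pow, one_mul]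
  | succ i =>
    rw [h.beta_succ i hi, leadSq, if_neg i.succ_ne_zero]
    ring

lemma beta_ne_zero (h : IsSubresultantPRS ℓ R Q β ψ) {i : ℕ} (hi : i < ℓ) : β (i + 1) ≠ 0 := by
  rw [← pow_ne_zero_iff two_ne_zero, h.beta_sq hi]
  exact mul_ne_zero (h.leadSq_ne_zero hi.le) (pow_ne_zero _ (pow_ne_zero _ (h.psi_ne_zero hi)))

lemma natDegree_quotient_add_le (h : IsSubresultantPRS ℓ R Q β ψ) {i : ℕ} (hi : i < ℓ) :
    (Q (i + 1)).natDegree + (R (i + 1)).natDegree ≤ (R i).natDegree := by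
  have hle := h.natDegree_succ_le hi
  rcases eq_or_ne (Q (i + 1)) 0 with hQ | hQ
  · simpa [hQ] using hle
  · rw [← natDegree_mul hQ (h.ne_zero _ hi), eq_sub_of_add_eq (h.pseudo_division i hi).symm]
    refine (natDegree_sub_le _ _).trans (max_le (natDegree_smul_le _ _) ?_)
    exact (natDegree_smul_le _ _).trans ((natDegree_le_natDegree (h.degree_lt i hi).le).trans hle)

lemma pow_mul_subresultantCoeff (h : IsSubresultantPRS ℓ R Q β ψ) {i j b n : ℕ} (e : ℕ)
    (hi : i < ℓ) (hj : j < (R (i + 1)).natDegree) (hb : (R (i + 2)).natDegree ≤ j + b)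
    (hn : (R i).natDegree = j + (b + n)) :
    ((R (i + 1)).leadingCoeff ^ (degreeDrop R i + 1)) ^ ((R (i + 1)).natDegree - j) *
        subresultantCoeff j e (R i) (R (i + 1)) =
      β (i + 1) ^ ((R (i + 1)).natDegree - j) * (R (i + 1)).leadingCoeff ^ n *
        sylvesterMinor j e ((R (i + 1)).natDegree - j) b (R (i + 2)) (R (i + 1)) := by
  have hQ := h.natDegree_quotient_add_le hi
  rw [subresultantCoeff, pow_mul_sylvesterMinor_eq (h.pseudo_division i hi) (by omega),
    show (R i).natDegree - j = b + n by omega,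
    sylvesterMinor_add_right e n (by omega) hb (by omega), mul_assoc]

lemma subresultantCoeff_eq_beta_mul_coeff (h : IsSubresultantPRS ℓ R Q β ψ) {i j : ℕ} (e : ℕ)
    (hi : i + 2 ≤ ℓ) (hj : (R (i + 1)).natDegree = j + 1) :
    subresultantCoeff j e (R i) (R (i + 1)) = β (i + 1) * (R (i + 2)).coeff e := by
  have hle := h.natDegree_succ_le (show i < ℓ by omega)
  have hlt := h.natDegree_lt hi
  have hstep := h.pow_mul_subresultantCoeff (j := j) (b := 0) (n := degreeDrop R i + 1) e
    (show i < ℓ by omega) (by omega) (by omega) (by rw [degreeDrop]; omega)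
  rw [show (R (i + 1)).natDegree - j = 1 by omega, sylvesterMinor_one_zero, pow_one, pow_one,
    mul_right_comm, mul_comm] at hstep
  exact mul_right_cancel₀ (pow_ne_zero _ (h.leadingCoeff_ne_zero (by omega))) hstep

lemma pow_mul_subresultantCoeff_sq (h : IsSubresultantPRS ℓ R Q β ψ) {i j z : ℕ} (e : ℕ)
    (hi : i + 2 ≤ ℓ) (hz : (R (i + 1)).natDegree = j + (z + 1))
    (hj : j < (R (i + 2)).natDegree) :
    (((R (i + 1)).leadingCoeff ^ 2) ^ (degreeDrop R i + 1)) ^ (z + 1) *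
        subresultantCoeff j e (R i) (R (i + 1)) ^ 2 =
      (leadSq R i * (ψ (i + 1) ^ 2) ^ degreeDrop R i) ^ (z + 1) *
        ((R (i + 1)).leadingCoeff ^ 2) ^ (degreeDrop R i + degreeDrop R (i + 1)) *
        subresultantCoeff j e (R (i + 1)) (R (i + 2)) ^ 2 := by
  have hdrop := h.natDegree_eq_add_degreeDrop (show i < ℓ by omega)
  have hdrop' : (R (i + 1)).natDegree = (R (i + 2)).natDegree + degreeDrop R (i + 1) :=
    h.natDegree_eq_add_degreeDrop hi
  have hz' : (R (i + 1)).natDegree - j = z + 1 := by omega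
  have hstep := h.pow_mul_subresultantCoeff (j := j) (b := (R (i + 2)).natDegree - j)
    (n := degreeDrop R i + degreeDrop R (i + 1)) e (show i < ℓ by omega) (by omega) (by omega)
    (by omega)
  have hcomm : subresultantCoeff j e (R (i + 1)) (R (i + 2)) ^ 2 =
      sylvesterMinor j e (z + 1) ((R (i + 2)).natDegree - j) (R (i + 2)) (R (i + 1)) ^ 2 := by
    rw [subresultantCoeff, sylvesterMinor_comm_sq, hz']
  rw [← h.beta_sq (show i < ℓ by omega), hcomm]
  rw [hz'] at hstep
  linear_combination congrArg (· ^ 2) hstep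

lemma leadSq_pow_mul_subresultantCoeff_zero_sq (h : IsSubresultantPRS ℓ R Q β ψ) {i j y : ℕ}
    (e : ℕ) (hi : i < ℓ) (hy : (R (i + 1)).natDegree = j + (y + 1)) :
    leadSq R i ^ (y + 1) * (ψ (i + 1) ^ 2) ^ (degreeDrop R i + y) *
        subresultantCoeff j e (R 0) (R 1) ^ 2 =
      subresultantCoeff j e (R i) (R (i + 1)) ^ 2 := by
  induction i generalizing y with
  | zero => simp [leadSq, h.psi_one]
  | succ i ih =>
    have hdrop := h.natDegree_eq_add_degreeDrop hi
    obtain ⟨z, hz⟩ : ∃ z, (R (i + 1)).natDegree = j + (z + 1) :=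
      ⟨degreeDrop R (i + 1) + y, by omega⟩
    have hj : j < (R (i + 2)).natDegree := by rw [hy]; omega
    have hstep := h.pow_mul_subresultantCoeff_sq e hi hz hj
    rw [← ih (by omega) hz] at hstep
    rw [leadSq, if_neg i.succ_ne_zero, show degreeDrop R (i + 1) + y = z by omega]
    exact pow_mul_pow_mul_eq_of_mul_pow_eq
      (pow_ne_zero 2 (h.leadingCoeff_ne_zero (show i + 1 ≤ ℓ by omega)))
      (h.leadSq_ne_zero (show i ≤ ℓ by omega))
      (pow_ne_zero 2 (h.psi_ne_zero (show i < ℓ by omega)))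
      (show z = degreeDrop R (i + 1) + y by omega) (h.psi_succ_sq_mul hi) hstep

theorem subresultantCoeff_sq_eq_coeff_sq (h : IsSubresultantPRS ℓ R Q β ψ) {i j : ℕ} (e : ℕ)
    (hi : i + 2 ≤ ℓ) (hj : (R (i + 1)).natDegree = j + 1) :
    subresultantCoeff j e (R 0) (R 1) ^ 2 = (R (i + 2)).coeff e ^ 2 := by
  have hinv := h.leadSq_pow_mul_subresultantCoeff_zero_sq (y := 0) e (show i < ℓ by omega) hj
  rw [h.subresultantCoeff_eq_beta_mul_coeff e hi hj, mul_pow, zero_add, pow_one, add_zero,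
    ← h.beta_sq (by omega)] at hinv
  exact mul_left_cancel₀ (pow_ne_zero _ (h.beta_ne_zero (by omega))) hinv

end IsSubresultantPRS

end PRS

theorem stmt_8_general {D K : Type*} [CommRing D] [IsPrincipalIdealRing D]
    [NormalizedGCDMonoid D] [Field K] [Algebra D K] [FaithfulSMul D K] {A B S : D[X]} {ℓ i : ℕ}
    {R Q : ℕ → K[X]} {β ψ : ℕ → K} (h : IsSubresultantPRS ℓ R Q β ψ)
    (hR0 : R 0 = A.map (algebraMap D K)) (hR1 : R 1 = B.map (algebraMap D K)) (hi : i + 2 ≤ ℓ)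
    (hS : S.map (algebraMap D K) = R (i + 2)) {t : D}
    (ht : (Ideal.span {A, B}).leadingCoeffNth (A.natDegree + B.natDegree) ≤ Ideal.span {t}) :
    t ^ (A.natDegree + B.natDegree - 2 * (R (i + 1)).natDegree + 1) ∣ S.content := by
  have hinj := FaithfulSMul.algebraMap_injective D K
  have := hinj.isDomain
  have hlt := h.natDegree_lt hi
  have hle := h.natDegree_le_one (show i < ℓ by omega)
  have hle' := h.natDegree_one_le
  obtain ⟨j, hj⟩ : ∃ j, (R (i + 1)).natDegree = j + 1 := ⟨(R (i + 1)).natDegree - 1, by omega⟩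
  rw [hj, hR1, natDegree_map_eq_of_injective hinj] at hle
  rw [hR0, hR1, natDegree_map_eq_of_injective hinj, natDegree_map_eq_of_injective hinj] at hle'
  rw [dvd_content_iff_C_dvd, C_dvd_iff_dvd_coeff, hj]
  intro e
  have hdvd := pow_dvd_subresultantCoeff ht (show j < A.natDegree by omega) hle e
  have hsq : subresultantCoeff j e A B ^ 2 = S.coeff e ^ 2 := by
    apply hinj
    rw [map_pow, map_pow, ← subresultantCoeff_map hinj, ← hR0, ← hR1, ← coeff_map, hS,
      h.subresultantCoeff_sq_eq_coeff_sq e hi hj]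
  rcases sq_eq_sq_iff_eq_or_eq_neg.1 hsq with heq | heq
  · rwa [← heq]
  · rwa [heq, dvd_neg] at hdvd

/-- Let `D` be a Euclidean domain with a normalized gcd and fraction
field `K`, and let `A, B ∈ D[x]` be nonzero with `d_A := deg A ≥ d_B := deg B ≥ 1`.
Let `(R 0, R 1, …, R ℓ, R (ℓ+1) = 0)` be the subresultant PRS of `A` and `B` (not
necessarily normal; with quotients `Q i`, multipliers `α i`, `β i` given by the
subresultant formulas via the auxiliary sequence `ψ i`, degrees `d i = deg (R i)`, and
all terms lying in `D[x]` as witnessed by `R' i`), and let `t` be the essential part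
of the ideal `I` generated by `A` and `B` at order `d_A + d_B`.  Then for every `i`
with `2 ≤ i ≤ ℓ`, the power `t^(d_A + d_B - 2·d (i-1) + 1)` divides `cont (R i)`. -/
theorem stmt_8 {D : Type*} [EuclideanDomain D] [NormalizedGCDMonoid D]
    (A B : Polynomial D) (hA : A ≠ 0) (hB : B ≠ 0)
    (hdeg : B.natDegree ≤ A.natDegree) (hB1 : 1 ≤ B.natDegree)
    -- the subresultant PRS `R 0 = A, R 1 = B, …, R ℓ ≠ 0, R (ℓ+1) = 0` of `A` and `B`
    -- over the fraction field `K` of `D`, with quotients `Q i`, scalars `α i, β i`,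
    -- degrees `d i`, the auxiliary sequence `ψ i`, and terms `R' i` in `D[x]`
    (ℓ : ℕ) (R Q : ℕ → Polynomial (FractionRing D))
    (α β ψ : ℕ → FractionRing D)
    (R' : ℕ → Polynomial D) (d : ℕ → ℕ)
    (hR0 : R 0 = A.map (algebraMap D (FractionRing D)))
    (hR1 : R 1 = B.map (algebraMap D (FractionRing D)))
    (hRne : ∀ i, i ≤ ℓ → R i ≠ 0)
    (hRlast : R (ℓ + 1) = 0)
    (hd : ∀ i, d i = (R i).natDegree)
    (hαne : ∀ i, 1 ≤ i → i ≤ ℓ → α i ≠ 0)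
    (hβne : ∀ i, 1 ≤ i → i ≤ ℓ → β i ≠ 0)
    (hdesc : ∀ i, 1 ≤ i → i ≤ ℓ → (R (i + 1)).degree < (R i).degree)
    (hrec : ∀ i, 1 ≤ i → i ≤ ℓ → α i • R (i - 1) = Q i * R i + β i • R (i + 1))
    (hα : ∀ i, 1 ≤ i → i ≤ ℓ → α i = (R i).leadingCoeff ^ (d (i - 1) - d i + 1))
    (hψ1 : ψ 1 = -1)
    (hψ : ∀ i, 2 ≤ i → i ≤ ℓ →
      ψ i = (-(R (i - 1)).leadingCoeff) ^ (d (i - 2) - d (i - 1)) /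
        ψ (i - 1) ^ (d (i - 2) - d (i - 1) - 1))
    (hβ1 : β 1 = (-1) ^ (d 0 - d 1 + 1))
    (hβ : ∀ i, 2 ≤ i → i ≤ ℓ →
      β i = -(R (i - 1)).leadingCoeff * ψ i ^ (d (i - 1) - d i))
    (hR' : ∀ i, i ≤ ℓ + 1 → (R' i).map (algebraMap D (FractionRing D)) = R i)
    (t : D)
    (ht : IsEssentialPart (Ideal.span ({A, B} : Set (Polynomial D)))
      (A.natDegree + B.natDegree) t) :
    ∀ i, 2 ≤ i → i ≤ ℓ →
      t ^ (A.natDegree + B.natDegree - 2 * d (i - 1) + 1) ∣ (R' i).content := by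
  obtain rfl : d = fun i => (R i).natDegree := funext hd
  have hPRS : IsSubresultantPRS ℓ R Q β ψ :=
    { ne_zero := hRne
      natDegree_one_le := by
        have hinj := IsFractionRing.injective D (FractionRing D)
        rwa [hR0, hR1, natDegree_map_eq_of_injective hinj, natDegree_map_eq_of_injective hinj]
      degree_lt := fun i hi => hdesc (i + 1) (by omega) hi
      pseudo_division := fun i hi => hα (i + 1) (by omega) hi ▸ hrec (i + 1) (by omega) hi
      psi_one := hψ1
      psi_succ := fun i => hψ (i + 2) (by omega)
      beta_one := hβ1
      beta_succ := fun i => hβ (i + 2) (by omega) }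
  intro i hi hiℓ
  obtain ⟨i, rfl⟩ := Nat.exists_eq_add_of_le' hi
  exact stmt_8_general hPRS hR0 hR1 hiℓ (hR' _ (by omega)) ht.leadingCoeffNth_le_span
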